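/- Let {p_k} be left polynomials over a division ring R with p_k of degree exactly k, {q_l} right polynomials, and I : ℕ → ℕ → R bimoments with ⟨p_k, q_l⟩ = 0 for k ≠ l. Let f(x) = ∑_{i=0}^{n} a_i x^i with all a_i in the center of R. Then the infinite matrix X with entries X_{i,j} = ⟨p_i · f, q_j⟩ satisfies X_{i,j} = 0 whenever j > i + n; that is, X lies in the band (−∞, n]. -/

import Mathlib

/-!
For a fixed right polynomial `q j`, the pairing `g ↦ ⟨g, q j⟩` is left `R`-linear. Over a division
ring, `p 0, …, p (j - 1)` span the left polynomials of degree `< j`, and all of them are orthogonal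
to `q j`; hence so is `p i * f`, whose degree is at most `i + n < j`.
-/

/-- The pairing of a left polynomial `p(x) = ∑ aᵢ xⁱ` with a right polynomial
`q(y) = ∑ yʲ bⱼ` relative to bimoments `I`: `⟨p, q⟩ = ∑_{i,j} aᵢ · I i j · bⱼ`. -/
noncomputable def bimomentPairing {R : Type*} [DivisionRing R] (I : ℕ → ℕ → R)
    (p q : Polynomial R) : R :=
  ∑ i ∈ p.support, ∑ j ∈ q.support, p.coeff i * I i j * q.coeff j

open Polynomial

theorem degree_eq_natCast_iff_coeff {R : Type*} [Semiring R] {p : R[X]} {n : ℕ} :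
    p.degree = n ↔ p.coeff n ≠ 0 ∧ ∀ i, n < i → p.coeff i = 0 := by
  rw [← natDegree_le_iff_coeff_eq_zero, natDegree_le_iff_degree_le]
  exact ⟨fun h => ⟨coeff_ne_zero_of_eq_degree h, h.le⟩,
    fun h => degree_eq_of_le_of_coeff_ne_zero h.2 h.1⟩

theorem linearMap_eq_zero_of_degree_lt {R M : Type*} [Ring R] [AddCommMonoid M] [Module R M]
    (S : Sequence R) {m : ℕ} (hS : ∀ i < m, IsUnit (S i).leadingCoeff) (φ : R[X] →ₗ[R] M)
    (hφ : ∀ i < m, φ (S i) = 0) {g : R[X]} (hg : g.degree < m) : φ g = 0 := by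
  have hspan : Submodule.span R (S '' Set.Iio m) ≤ LinearMap.ker φ :=
    Submodule.span_le.2 (Set.image_subset_iff.2 hφ)
  rw [S.span_degreeLT hS] at hspan
  exact hspan (mem_degreeLT.2 hg)

/-- The left-linear functional `g ↦ ⟨g, q⟩` pairing a left polynomial with the fixed right
polynomial `q`, determined by its values `⟨xⁱ, q⟩ = ∑ⱼ I i j · bⱼ` on monomials. -/
noncomputable def bimomentFunctional {R : Type*} [Semiring R] (I : ℕ → ℕ → R) (q : R[X]) :
    R[X] →ₗ[R] R :=
  lsum fun i => LinearMap.toSpanSingleton R R (∑ j ∈ q.support, I i j * q.coeff j)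

section DivisionRing

variable {R : Type*} [DivisionRing R] (I : ℕ → ℕ → R)

theorem bimomentFunctional_apply (p q : R[X]) :
    bimomentFunctional I q p = bimomentPairing I p q := by
  simp [bimomentFunctional, bimomentPairing, sum_def, Finset.mul_sum, mul_assoc]

theorem bimomentPairing_eq_zero_of_degree_lt (S : Sequence R) {q : R[X]} {m : ℕ}
    (hq : ∀ k < m, bimomentPairing I (S k) q = 0) {g : R[X]} (hg : g.degree < m) :
    bimomentPairing I g q = 0 := by
  simp only [← bimomentFunctional_apply] at hq ⊢
  have hunit : ∀ k < m, IsUnit (S k).leadingCoeff := fun k _ =>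
    (leadingCoeff_ne_zero.2 (S.ne_zero k)).isUnit
  exact linearMap_eq_zero_of_degree_lt S hunit _ hq hg

theorem pairing_mulRight_banded_general (p q : ℕ → R[X]) (hp : ∀ k, (p k).degree = k)
    (horth : ∀ k l, k < l → bimomentPairing I (p k) (q l) = 0)
    (n : ℕ) (f : R[X]) (hf : f.natDegree ≤ n) :
    ∀ i j : ℕ, i + n < j → bimomentPairing I (p i * f) (q j) = 0 := by
  intro i j hij
  have hdeg : (p i * f).degree < j :=
    calc (p i * f).degree ≤ i + n :=
          degree_mul_le_of_le (hp i).le (degree_le_of_natDegree_le hf)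
      _ < j := mod_cast hij
  exact bimomentPairing_eq_zero_of_degree_lt I ⟨p, hp⟩ (fun k hk => horth k j hk) hdeg

end DivisionRing

/-- if `p k` has degree exactly `k`, `⟨p k, q l⟩ = 0` for `k ≠ l`, and
`f(x) = ∑_{i=0}^n aᵢ xⁱ` has central coefficients, then the matrix
`X i j = ⟨p i · f, q j⟩` vanishes whenever `j > i + n`, i.e. `X` lies in the band `(-∞, n]`. -/
theorem pairing_mulRight_banded {R : Type*} [DivisionRing R] (I : ℕ → ℕ → R)
    (p q : ℕ → Polynomial R)
    (hp : ∀ k, (p k).coeff k ≠ 0 ∧ ∀ i, k < i → (p k).coeff i = 0)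
    (horth : ∀ k l, k ≠ l → bimomentPairing I (p k) (q l) = 0)
    (n : ℕ) (f : Polynomial R)
    (hfC : ∀ i, f.coeff i ∈ Set.center R) (hfn : ∀ i, n < i → f.coeff i = 0) :
    ∀ i j : ℕ, i + n < j → bimomentPairing I (p i * f) (q j) = 0 :=
  pairing_mulRight_banded_general I p q (fun k => degree_eq_natCast_iff_coeff.2 (hp k))
    (fun k l hkl => horth k l hkl.ne) n f (natDegree_le_iff_coeff_eq_zero.2 hfn)
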